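/- arXiv:2310.17687 — 2 statements merged into one kernel-verified Lean document; each statement's English description precedes it below -/
import Mathlib

section
/- Let (Z, 𝒵, μ) be a measure space with μ σ-finite, and let p, q : Z → ℝ be measurable with p(z) > 0 and q(z) > 0 μ-almost everywhere, ∫ p dμ = 1 and ∫ q dμ = 1. Let P = μ.withDensity p and Q = μ.withDensity q be the corresponding probability measures, and let w₁, w₂ > 0 with w₁ + w₂ = 1. Assume z ↦ p(z)·log(p(z)/(w₁·p(z) + w₂·q(z))) and z ↦ q(z)·log(q(z)/(w₁·p(z) + w₂·q(z))) are μ-integrable. Then ∫ (w₁·p·log(w₁·p/(w₁·p + w₂·q)) + w₂·q·log(w₂·q/(w₁·p + w₂·q))) dμ = JSD_{w₁,w₂}(P ‖ Q) + w₁·log(w₁) + w₂·log(w₂), where JSD_{w₁,w₂}(P ‖ Q) = w₁·KL(P ‖ w₁·P + w₂·Q) + w₂·KL(Q ‖ w₁·P + w₂·Q) and KL denotes Kullback–Leibler divergence. -/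
/-!
All measures involved are given by densities with respect to `μ`: the mixture `w₁ • P + w₂ • Q` has
density `m = w₁ p + w₂ q`. Hence, by the chain rule for Radon–Nikodym derivatives,
`dP / d(w₁ • P + w₂ • Q) = p / m`, and the first Kullback–Leibler term is the finite real
integral `∫ p log (p / m) dμ` (`klDiv_withDensity_ofReal`). The identity is then
`log (w₁ p / m) = log w₁ + log (p / m)` integrated against `w₁ p`, where `∫ p dμ = 1` produces the
constant `w₁ log w₁`; likewise for `q`.
-/

open MeasureTheory Classical

/-- Kullback–Leibler divergence `KL(P ‖ Q)`, valued in `EReal`: it equals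
`∫ log(dP/dQ) dP` when `P ≪ Q` and the log-likelihood ratio is integrable,
and `⊤` otherwise. -/
noncomputable def klDiv {Z : Type*} [MeasurableSpace Z] (P Q : Measure Z) : EReal :=
  if P ≪ Q ∧ Integrable (llr P Q) P then ((∫ z, llr P Q z ∂P : ℝ) : EReal) else ⊤

/-- Weighted Jensen–Shannon divergence
`JSD_{w₁,w₂}(P ‖ Q) = w₁·KL(P ‖ w₁·P + w₂·Q) + w₂·KL(Q ‖ w₁·P + w₂·Q)`. -/
noncomputable def jsd {Z : Type*} [MeasurableSpace Z] (w₁ w₂ : ℝ) (P Q : Measure Z) : EReal :=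
  (w₁ : EReal) * klDiv P (ENNReal.ofReal w₁ • P + ENNReal.ofReal w₂ • Q) +
    (w₂ : EReal) * klDiv Q (ENNReal.ofReal w₁ • P + ENNReal.ofReal w₂ • Q)

/-- For densities positive almost everywhere, the log-likelihood ratio is `log (f / g)`. -/
lemma llr_withDensity_ofReal {Z : Type*} [MeasurableSpace Z] (μ : Measure Z) [SigmaFinite μ]
    (f g : Z → ℝ) (hf : Measurable f) (hg : Measurable g)
    (hfpos : ∀ᵐ z ∂μ, 0 < f z) (hgpos : ∀ᵐ z ∂μ, 0 < g z) :
    llr (μ.withDensity fun z => ENNReal.ofReal (f z))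
      (μ.withDensity fun z => ENNReal.ofReal (g z)) =ᵐ[μ] fun z => Real.log (f z / g z) := by
  have hsf : SigmaFinite (μ.withDensity fun z => ENNReal.ofReal (f z)) :=
    SigmaFinite.withDensity_of_ne_top (ae_of_all _ fun _ => ENNReal.ofReal_ne_top)
  have h₁ := Measure.rnDeriv_withDensity_right
    (μ.withDensity fun z => ENNReal.ofReal (f z)) μ
    (f := fun z => ENNReal.ofReal (g z)) hg.ennreal_ofReal.aemeasurable
    (by filter_upwards [hgpos] with z hz using (ENNReal.ofReal_pos.2 hz).ne')
    (ae_of_all _ fun _ => ENNReal.ofReal_ne_top)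
  have h₂ := Measure.rnDeriv_withDensity μ hf.ennreal_ofReal
  filter_upwards [h₁, h₂, hfpos, hgpos] with z h₁ h₂ hfz hgz
  rw [llr, h₁, h₂, ENNReal.toReal_mul, ENNReal.toReal_inv, ENNReal.toReal_ofReal hfz.le,
    ENNReal.toReal_ofReal hgz.le, div_eq_inv_mul]

/-- The Kullback–Leibler divergence between measures with almost everywhere positive densities, as
an integral with respect to the reference measure. -/
lemma klDiv_withDensity_ofReal {Z : Type*} [MeasurableSpace Z] (μ : Measure Z) [SigmaFinite μ]
    (f g : Z → ℝ) (hf : Measurable f) (hg : Measurable g)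
    (hfpos : ∀ᵐ z ∂μ, 0 < f z) (hgpos : ∀ᵐ z ∂μ, 0 < g z)
    (hint : Integrable (fun z => f z * Real.log (f z / g z)) μ) :
    klDiv (μ.withDensity fun z => ENNReal.ofReal (f z))
      (μ.withDensity fun z => ENNReal.ofReal (g z)) =
      ((∫ z, f z * Real.log (f z / g z) ∂μ : ℝ) : EReal) := by
  have hllr := llr_withDensity_ofReal μ f g hf hg hfpos hgpos
  have hlt : ∀ᵐ z ∂μ, ENNReal.ofReal (f z) < ⊤ := ae_of_all _ fun _ => ENNReal.ofReal_lt_top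
  have hae : (fun z => (ENNReal.ofReal (f z)).toReal •
      llr (μ.withDensity fun z => ENNReal.ofReal (f z))
        (μ.withDensity fun z => ENNReal.ofReal (g z)) z)
      =ᵐ[μ] fun z => f z * Real.log (f z / g z) := by
    filter_upwards [hllr, hfpos] with z hz hfz
    rw [hz, ENNReal.toReal_ofReal hfz.le, smul_eq_mul]
  have hac : (μ.withDensity fun z => ENNReal.ofReal (f z)) ≪
      μ.withDensity fun z => ENNReal.ofReal (g z) :=
    (withDensity_absolutelyContinuous _ _).trans
      (withDensity_absolutelyContinuous' hg.ennreal_ofReal.aemeasurable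
        (by filter_upwards [hgpos] with z hz using (ENNReal.ofReal_pos.2 hz).ne'))
  rw [klDiv, if_pos ⟨hac, (integrable_withDensity_iff_integrable_smul' hf.ennreal_ofReal hlt).2
    (hint.congr hae.symm)⟩, integral_withDensity_eq_integral_toReal_smul hf.ennreal_ofReal hlt,
    integral_congr_ae hae]

lemma mixture_withDensity_ofReal {Z : Type*} [MeasurableSpace Z] (μ : Measure Z)
    (p q : Z → ℝ) (hp : Measurable p) (hq : Measurable q)
    (hppos : ∀ᵐ z ∂μ, 0 < p z) (hqpos : ∀ᵐ z ∂μ, 0 < q z)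
    (w₁ w₂ : ℝ) (hw₁ : 0 < w₁) (hw₂ : 0 < w₂) :
    ENNReal.ofReal w₁ • (μ.withDensity fun z => ENNReal.ofReal (p z)) +
      ENNReal.ofReal w₂ • (μ.withDensity fun z => ENNReal.ofReal (q z)) =
      μ.withDensity fun z => ENNReal.ofReal (w₁ * p z + w₂ * q z) := by
  rw [← withDensity_smul _ hp.ennreal_ofReal, ← withDensity_smul _ hq.ennreal_ofReal,
    ← withDensity_add_left (hp.ennreal_ofReal.const_smul _)]
  refine withDensity_congr_ae ?_
  filter_upwards [hppos, hqpos] with z hpz hqz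
  rw [ENNReal.ofReal_add (by positivity) (by positivity), ENNReal.ofReal_mul hw₁.le,
    ENNReal.ofReal_mul hw₂.le]
  rfl

/-- **Value of the adversarial objective at the optimal discriminator.** With densities
`p, q` (w.r.t. a σ-finite measure `μ`) of the probability measures `P, Q` and weights
`w₁ + w₂ = 1`, the value of the adversarial objective at the optimal discriminator
`D = w₁p/(w₁p + w₂q)` equals the weighted Jensen–Shannon divergence plus the constant
`w₁·log(w₁) + w₂·log(w₂)`. -/
theorem adversarial_objective_eq_jsd_add_const
    {Z : Type*} [MeasurableSpace Z] (μ : Measure Z) [SigmaFinite μ]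
    (p q : Z → ℝ) (hp : Measurable p) (hq : Measurable q)
    (hppos : ∀ᵐ z ∂μ, 0 < p z) (hqpos : ∀ᵐ z ∂μ, 0 < q z)
    (hpint : ∫ z, p z ∂μ = 1) (hqint : ∫ z, q z ∂μ = 1)
    (P Q : Measure Z)
    (hP : P = μ.withDensity (fun z => ENNReal.ofReal (p z)))
    (hQ : Q = μ.withDensity (fun z => ENNReal.ofReal (q z)))
    (w₁ w₂ : ℝ) (hw₁ : 0 < w₁) (hw₂ : 0 < w₂) (hw : w₁ + w₂ = 1)
    (hint₁ : Integrable (fun z => p z * Real.log (p z / (w₁ * p z + w₂ * q z))) μ)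
    (hint₂ : Integrable (fun z => q z * Real.log (q z / (w₁ * p z + w₂ * q z))) μ) :
    ((∫ z, (w₁ * p z * Real.log (w₁ * p z / (w₁ * p z + w₂ * q z)) +
        w₂ * q z * Real.log (w₂ * q z / (w₁ * p z + w₂ * q z))) ∂μ : ℝ) : EReal) =
      jsd w₁ w₂ P Q + ((w₁ * Real.log w₁ + w₂ * Real.log w₂ : ℝ) : EReal) := by
  have hpi : Integrable p μ := Integrable.of_integral_ne_zero (by rw [hpint]; exact one_ne_zero)
  have hqi : Integrable q μ := Integrable.of_integral_ne_zero (by rw [hqint]; exact one_ne_zero)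
  have hm : Measurable fun z => w₁ * p z + w₂ * q z := by fun_prop
  have hmpos : ∀ᵐ z ∂μ, 0 < w₁ * p z + w₂ * q z := by
    filter_upwards [hppos, hqpos] with z hpz hqz
    positivity
  rw [jsd, hP, hQ, mixture_withDensity_ofReal μ p q hp hq hppos hqpos w₁ w₂ hw₁ hw₂,
    klDiv_withDensity_ofReal μ p _ hp hm hppos hmpos hint₁,
    klDiv_withDensity_ofReal μ q _ hq hm hqpos hmpos hint₂]
  norm_cast
  have hsplit : (fun z => w₁ * p z * Real.log (w₁ * p z / (w₁ * p z + w₂ * q z)) +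
        w₂ * q z * Real.log (w₂ * q z / (w₁ * p z + w₂ * q z))) =ᵐ[μ]
      fun z => (w₁ * (p z * Real.log (p z / (w₁ * p z + w₂ * q z))) +
        w₂ * (q z * Real.log (q z / (w₁ * p z + w₂ * q z)))) +
        (w₁ * Real.log w₁ * p z + w₂ * Real.log w₂ * q z) := by
    filter_upwards [hppos, hqpos, hmpos] with z hpz hqz hmz
    rw [mul_div_assoc, mul_div_assoc, Real.log_mul hw₁.ne' (div_pos hpz hmz).ne',
      Real.log_mul hw₂.ne' (div_pos hqz hmz).ne']
    ring
  rw [integral_congr_ae hsplit,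
    integral_add (by exact (hint₁.const_mul _).add (hint₂.const_mul _))
      (by exact (hpi.const_mul _).add (hqi.const_mul _)),
    integral_add (hint₁.const_mul _) (hint₂.const_mul _),
    integral_add (hpi.const_mul _) (hqi.const_mul _)]
  simp only [integral_const_mul, hpint, hqint, mul_one]
end

section
/- Let (Ω, 𝒜, P) be a probability space and U : Ω → ℝ a random variable whose law is atomless (P(U = u) = 0 for every u ∈ ℝ). Let f : ℝ → ℝ be strictly monotone increasing and g : ℝ → ℝ strictly monotone decreasing. Let F denote the cumulative distribution function of f(U) (i.e., F(t) = P(f(U) ≤ t)) and G denote the cumulative distribution function of g(U). Then for every u ∈ ℝ, G(g(u)) = 1 − F(f(u)). In particular, if G is injective, then for every u ∈ ℝ, g(u) is the unique real number m' satisfying G(m') = 1 − F(f(u)). -/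
/-!
By strict monotonicity `{f(U) ≤ f(u)} = {U ≤ u}` and `{g(U) ≤ g(u)} = {u ≤ U}`. Since `U` has no
atom at `u`, these two events are complementary up to a null set, so their probabilities sum to `1`.
Uniqueness of the solution `g(u)` is then injectivity of `G`.
-/

open MeasureTheory

/-- **Bijective generation mechanisms, decreasing branch.** If the factual mediator is
`f(U)` with `f` strictly increasing and the counterfactual mediator is `g(U)` with `g`
strictly decreasing, and the law of `U` is atomless, then with `F`, `G` the CDFs of
`f(U)`, `g(U)`, we have `G(g(u)) = 1 − F(f(u))` for every `u`; in particular, if `G` is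
injective then `g(u)` is the unique `m'` with `G(m') = 1 − F(f(u))`. -/
theorem bgm_counterfactual_decreasing
    {Ω : Type*} [MeasurableSpace Ω] (P : Measure Ω) [IsProbabilityMeasure P]
    (U : Ω → ℝ) (hU : Measurable U)
    (hatomless : ∀ u : ℝ, P {ω | U ω = u} = 0)
    (f g : ℝ → ℝ) (hf : StrictMono f) (hg : StrictAnti g)
    (F G : ℝ → ℝ)
    (hF : ∀ t, F t = (P {ω | f (U ω) ≤ t}).toReal)
    (hG : ∀ t, G t = (P {ω | g (U ω) ≤ t}).toReal) :
    (∀ u : ℝ, G (g u) = 1 - F (f u)) ∧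
      (Function.Injective G → ∀ u : ℝ, ∀ m' : ℝ, G m' = 1 - F (f u) ↔ m' = g u) := by
  have key : ∀ u : ℝ, G (g u) = 1 - F (f u) := by
    intro u
    rw [hF, hG]
    simp only [hf.le_iff_le, hg.le_iff_ge]
    -- As `U = u` is a null event, `{u ≤ U}` has the measure of `{U ≤ u}ᶜ = {u < U}`.
    have hae : ({ω | u ≤ U ω} : Set Ω) =ᵐ[P] ({ω | U ω ≤ u}ᶜ : Set Ω) := by
      have hne : ∀ᵐ ω ∂P, U ω ≠ u := by
        simpa [ae_iff] using hatomless u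
      filter_upwards [hne] with ω hω
      have hiff : u ≤ U ω ↔ ¬ U ω ≤ u :=
        ⟨fun h => not_le.mpr (lt_of_le_of_ne h hω.symm), fun h => (not_le.mp h).le⟩
      exact propext hiff
    rw [measure_congr hae]
    exact probReal_compl_eq_one_sub (measurableSet_le hU measurable_const)
  refine ⟨key, fun hinj u m' => ?_⟩
  rw [← key u]
  exact hinj.eq_iff
end
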